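/- For every integer k ≥ 3, the graph S^+_k − w_4, where S^+_k is obtained with the case-a neighbourhood of w^+, is NOT isomorphic to any induced subgraph of J_k − z_g, where g = (k−1)(k+1). -/

import Mathlib

/-- The `k`-path power on `n` vertices (0-indexed: vertex `i : Fin n` represents
vertex `i+1`): distinct vertices are adjacent iff their indices differ by at most `k`. -/
def pathPower (k n : ℕ) : SimpleGraph (Fin n) :=
  SimpleGraph.fromRel (fun i j => |(i.val : ℤ) - (j.val : ℤ)| ≤ k)

/-- `G - x`: the induced subgraph of `G` on all vertices other than `x`. -/
def deleteVert {V : Type*} (G : SimpleGraph V) (x : V) : SimpleGraph {y : V // y ∈ {y : V | y ≠ x}} :=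
  G.induce {y : V | y ≠ x}

/-- The graph `J_k`: the `k`-path power on `(2k-1)(k+1)+1` vertices. -/
def Jgraph (k : ℕ) : SimpleGraph (Fin ((2 * k - 1) * (k + 1) + 1)) :=
  pathPower k ((2 * k - 1) * (k + 1) + 1)

/-- Vertices of the graph `S^+_k` (with `n = (k-1)(k+1)+2` path-power vertices):
`v i` represents `v_{i+1}`, together with `w_1, w_2, w_3, w_4` and `w^+`. -/
inductive SPVert (n : ℕ) where
  | v (i : Fin n)
  | w1 | w2 | w3 | w4
  | wp

/-- The graph `S^+_k` on path-power part of size `n`, where the neighbourhood of the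
extra vertex `w^+` is the set `A`:  the vertices `v_1, …, v_n` induce a `k`-path power,
with the additional edges `w_1w_2`, `w_2v_1`, `v_nw_3`, `w_3w_4`, and `w^+` joined to `A`. -/
def SPlusGraph (k n : ℕ) (A : Set (SPVert n)) : SimpleGraph (SPVert n) :=
  SimpleGraph.fromRel (fun x y =>
    (∃ i j : Fin n, x = .v i ∧ y = .v j ∧ |(i.val : ℤ) - (j.val : ℤ)| ≤ k) ∨
    (x = .w1 ∧ y = .w2) ∨
    (∃ i : Fin n, x = .w2 ∧ y = .v i ∧ i.val = 0) ∨
    (∃ i : Fin n, x = .v i ∧ i.val = n - 1 ∧ y = .w3) ∨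
    (x = .w3 ∧ y = .w4) ∨
    (x = .wp ∧ y ∈ A))

/-- Case-a neighbourhood of `w^+`: `{w_1, w_2, v_1, …, v_k}`. -/
def caseA (k n : ℕ) : Set (SPVert n) :=
  {x | x = .w1 ∨ x = .w2 ∨ ∃ i : Fin n, x = .v i ∧ i.val < k}

/-- Case-b neighbourhood of `w^+`: `{v_{n-k+1}, …, v_n, w_3, w_4}`. -/
def caseB (k n : ℕ) : Set (SPVert n) :=
  {x | x = .w3 ∨ x = .w4 ∨ ∃ i : Fin n, x = .v i ∧ n - k ≤ i.val}

/-- Case-c neighbourhood of `w^+`: `{w_1, w_2, v_1, …, v_{k-1}}`. -/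
def caseC (k n : ℕ) : Set (SPVert n) :=
  {x | x = .w1 ∨ x = .w2 ∨ ∃ i : Fin n, x = .v i ∧ i.val < k - 1}

/-- Case-d neighbourhood of `w^+`: `{v_{n-k+2}, …, v_n, w_3, w_4}`. -/
def caseD (k n : ℕ) : Set (SPVert n) :=
  {x | x = .w3 ∨ x = .w4 ∨ ∃ i : Fin n, x = .v i ∧ n - k + 1 ≤ i.val}

/-!
In an embedding of a `k`-path power on more than `2k` vertices into a longer one, two vertices at
index distance `k + 1` have all vertices between them squeezed strictly between their images; this
makes the embedding monotone, hence a translation or a reflected translation. In `S⁺ₖ - w₄` with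
the case-a neighbourhood, `w⁺, v₁, …, vₙ` is such a path power. The vertices `w₁` and `w₃` are each
adjacent to exactly one end of it, so they must lie `k` beyond the two ends of its image, inside
the host. This leaves so little room for the image, an interval, that it always covers the middle
of the host, where the deleted vertex lies.
-/

/-- `x 0, …, x n` are integer positions of the vertices of the `k`-path power on `n + 1` vertices
that respect both adjacency and non-adjacency. The values of `x` beyond `n` are irrelevant; taking
`ℕ` rather than `Fin (n + 1)` as the domain keeps index arithmetic free of coercions. -/
def IsPathPowerPlacement (k n : ℕ) (x : ℕ → ℤ) : Prop :=
  ∀ i ≤ n, ∀ j ≤ n, |x i - x j| ≤ k ↔ |(i : ℤ) - j| ≤ k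

namespace IsPathPowerPlacement

variable {k n : ℕ} {x : ℕ → ℤ}

theorem neg (hx : IsPathPowerPlacement k n x) : IsPathPowerPlacement k n (-x) := by
  intro i hi j hj
  rw [← hx i hi j hj, Pi.neg_apply, Pi.neg_apply, ← neg_sub', abs_neg]

theorem abs_sub_le_iff (hx : IsPathPowerPlacement k n x) {i j : ℕ} (hij : i ≤ j) (hj : j ≤ n) :
    |x i - x j| ≤ k ↔ j ≤ i + k := by
  rw [hx i (hij.trans hj) j hj, abs_le]
  omega

theorem abs_sub_le (hx : IsPathPowerPlacement k n x) {i j : ℕ} (hij : i ≤ j) (hjk : j ≤ i + k)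
    (hj : j ≤ n) : |x i - x j| ≤ k :=
  (hx.abs_sub_le_iff hij hj).2 hjk

theorem lt_abs_sub (hx : IsPathPowerPlacement k n x) {i j : ℕ} (hij : i + k < j) (hj : j ≤ n) :
    k < |x i - x j| :=
  not_le.1 fun h ↦ hij.not_ge ((hx.abs_sub_le_iff (by omega) hj).1 h)

theorem apply_mem_Ioo (hx : IsPathPowerPlacement k n x) {i j : ℕ} (hi : i + k + 1 ≤ n)
    (hlt : x i < x (i + k + 1)) (hij : i < j) (hj : j < i + k + 1) :
    x j ∈ Set.Ioo (x i) (x (i + k + 1)) := by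
  have far := hx.lt_abs_sub (i := i) (j := i + k + 1) (by omega) hi
  have near_left := hx.abs_sub_le (i := i) (j := j) (by omega) (by omega) (by omega)
  have near_right := hx.abs_sub_le (i := j) (j := i + k + 1) (by omega) (by omega) hi
  rw [lt_abs] at far
  rw [abs_le] at near_left near_right
  rw [Set.mem_Ioo]
  omega

theorem lt_apply_add_add_one (hx : IsPathPowerPlacement k n x) (hk : 1 ≤ k) (h0 : x 0 < x (k + 1))
    {i : ℕ} (hi : i + k + 1 ≤ n) : x i < x (i + k + 1) := by
  induction i with
  | zero => simpa using h0
  | succ i ih =>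
    have mid := hx.apply_mem_Ioo (j := i + 1) (by omega) (ih (by omega)) (by omega) (by omega)
    have far := hx.lt_abs_sub (i := i + 1) (j := i + 1 + k + 1) (by omega) hi
    have near := hx.abs_sub_le (i := i + k + 1) (j := i + 1 + k + 1) (by omega) (by omega) hi
    rw [Set.mem_Ioo] at mid
    rw [lt_abs] at far
    rw [abs_le] at near
    omega

theorem lt_apply_succ (hx : IsPathPowerPlacement k n x) (hk : 1 ≤ k) (hn : 2 * k ≤ n)
    (h0 : x 0 < x (k + 1)) {i : ℕ} (hi : i + 1 ≤ n) : x i < x (i + 1) := by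
  by_cases h : i + k + 1 ≤ n
  · exact (hx.apply_mem_Ioo h (hx.lt_apply_add_add_one hk h0 h) (by omega) (by omega)).1
  · obtain ⟨j, rfl⟩ : ∃ j, i = j + k := ⟨i - k, by omega⟩
    exact (hx.apply_mem_Ioo hi (hx.lt_apply_add_add_one hk h0 hi) (by omega) (by omega)).2

theorem add_sub_le (hx : IsPathPowerPlacement k n x) (hk : 1 ≤ k) (hn : 2 * k ≤ n)
    (h0 : x 0 < x (k + 1)) {i j : ℕ} (hij : i ≤ j) (hj : j ≤ n) : x i + (j - i) ≤ x j := by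
  induction j, hij using Nat.le_induction with
  | base => simp
  | succ j _ ih =>
    have step := hx.lt_apply_succ hk hn h0 hj
    have := ih (by omega)
    omega

theorem apply_succ (hx : IsPathPowerPlacement k n x) (hk : 1 ≤ k) (hn : 2 * k ≤ n)
    (h0 : x 0 < x (k + 1)) {i : ℕ} (hi : i + 1 ≤ n) : x (i + 1) = x i + 1 := by
  -- Over a window of `k` steps `x` grows by at most `k`, and each step grows by at least one.
  obtain ⟨s, hsi, his, hsn⟩ : ∃ s, s ≤ i ∧ i + 1 ≤ s + k ∧ s + k ≤ n :=
    ⟨min i (n - k), by omega, by omega, by omega⟩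
  have window := hx.abs_sub_le (i := s) (j := s + k) (by omega) le_rfl hsn
  have before := hx.add_sub_le hk hn h0 hsi (by omega)
  have step := hx.lt_apply_succ hk hn h0 hi
  have after := hx.add_sub_le hk hn h0 his hsn
  rw [abs_le] at window
  omega

theorem eq_add_of_lt (hx : IsPathPowerPlacement k n x) (hk : 1 ≤ k) (hn : 2 * k ≤ n)
    (h0 : x 0 < x (k + 1)) {i : ℕ} (hi : i ≤ n) : x i = x 0 + i := by
  induction i with
  | zero => simp
  | succ i ih =>
    rw [hx.apply_succ hk hn h0 hi, ih (by omega)]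
    push_cast
    ring

theorem eq_add_or_eq_sub (hx : IsPathPowerPlacement k n x) (hk : 1 ≤ k) (hn : 2 * k ≤ n) :
    (∀ i ≤ n, x i = x 0 + i) ∨ ∀ i ≤ n, x i = x 0 - i := by
  have ends_far := hx.lt_abs_sub (i := 0) (j := k + 1) (by omega) (by omega)
  have ends_ne : x 0 ≠ x (k + 1) := by
    intro h
    rw [h, sub_self, abs_zero] at ends_far
    omega
  refine ends_ne.lt_or_gt.imp (fun h0 i hi ↦ hx.eq_add_of_lt hk hn h0 hi) fun h0 i hi ↦ ?_
  have := hx.neg.eq_add_of_lt hk hn (neg_lt_neg h0) hi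
  simp only [Pi.neg_apply] at this
  omega

theorem exists_eq_of_tails (hx : IsPathPowerPlacement k n x) (hk : 1 ≤ k) (hn : 2 * k ≤ n)
    {a c z N : ℤ} (ha : ∀ i ≤ n, |a - x i| ≤ k ↔ i = 0) (hc : ∀ i ≤ n, |c - x i| ≤ k ↔ i = n)
    (haN : a ∈ Set.Ico 0 N) (hcN : c ∈ Set.Ico 0 N) (hzN : N ≤ z + n + k + 1) (hz : z ≤ n + k) :
    ∃ i ≤ n, x i = z := by
  have a_near := (ha 0 (by omega)).2 rfl
  have a_far := mt (ha 1 (by omega)).1 (by omega)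
  have c_near := (hc n le_rfl).2 rfl
  have c_far := mt (hc (n - 1) (by omega)).1 (by omega)
  rw [abs_le] at a_near a_far c_near c_far
  rw [Set.mem_Ico] at haN hcN
  rcases hx.eq_add_or_eq_sub hk hn with increasing | decreasing
  · rw [increasing 1 (by omega)] at a_far
    rw [increasing n le_rfl] at c_near
    rw [increasing (n - 1) (by omega)] at c_far
    have a_eq : a = x 0 - k := by omega
    have c_eq : c = x 0 + n + k := by omega
    refine ⟨(z - x 0).toNat, by omega, ?_⟩
    rw [increasing _ (by omega)]
    omega
  · rw [decreasing 1 (by omega)] at a_far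
    rw [decreasing n le_rfl] at c_near
    rw [decreasing (n - 1) (by omega)] at c_far
    have a_eq : a = x 0 + k := by omega
    have c_eq : c = x 0 - n - k := by omega
    refine ⟨(x 0 - z).toNat, by omega, ?_⟩
    rw [decreasing _ (by omega)]
    omega

end IsPathPowerPlacement

section Embeddings

variable {V : Type*} {G : SimpleGraph V} {k n m : ℕ}

theorem pathPower_adj {i j : Fin n} :
    (pathPower k n).Adj i j ↔ i ≠ j ∧ |(i : ℤ) - j| ≤ k := by
  rw [pathPower, SimpleGraph.fromRel_adj, abs_sub_comm (j : ℤ), or_self]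

theorem pathPower_adj_zero_succ {j : Fin n} :
    (pathPower k (n + 1)).Adj 0 j.succ ↔ (j : ℕ) < k := by
  simp only [pathPower_adj, ne_eq, Fin.ext_iff, abs_le, Fin.val_succ, Fin.val_zero]
  omega

theorem pathPower_adj_succ_succ {i j : Fin n} :
    (pathPower k (n + 1)).Adj i.succ j.succ ↔ (pathPower k n).Adj i j := by
  simp [pathPower_adj]

theorem abs_sub_le_iff_eq_or_pathPower_adj {i j : Fin n} :
    |(i : ℤ) - j| ≤ k ↔ i = j ∨ (pathPower k n).Adj i j := by
  rw [pathPower_adj]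
  rcases eq_or_ne i j with rfl | hij <;> simp [*]

theorem abs_apply_sub_apply_le_iff (f : G ↪g pathPower k m) (u v : V) :
    |((f u : ℕ) : ℤ) - (f v : ℕ)| ≤ k ↔ u = v ∨ G.Adj u v := by
  rw [abs_sub_le_iff_eq_or_pathPower_adj, f.injective.eq_iff, f.map_adj_iff]

theorem isPathPowerPlacement_of_embedding (f : pathPower k (n + 1) ↪g pathPower k m) :
    IsPathPowerPlacement k n fun i ↦ (f (Fin.ofNat (n + 1) i) : ℕ) := by
  intro i hi j hj
  rw [abs_apply_sub_apply_le_iff, ← abs_sub_le_iff_eq_or_pathPower_adj, Fin.val_ofNat,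
    Fin.val_ofNat, Nat.mod_eq_of_lt (Nat.lt_add_one_of_le hi),
    Nat.mod_eq_of_lt (Nat.lt_add_one_of_le hj)]

/-- `a` is a vertex outside the family `s` whose only neighbour in `s` is `s i`: the first vertex
of a path that leaves `s` at `s i`. -/
structure IsTailAt {ι : Type*} (G : SimpleGraph V) (s : ι → V) (i : ι) (a : V) : Prop where
  ne : ∀ j, a ≠ s j
  adj_iff : ∀ j, G.Adj a (s j) ↔ j = i

theorem IsTailAt.abs_sub_apply_le_iff {ι : Type*} {s : ι → V} {i : ι} {a : V}
    (ha : IsTailAt G s i a) (f : G ↪g pathPower k m) (j : ι) :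
    |((f a : ℕ) : ℤ) - (f (s j) : ℕ)| ≤ k ↔ j = i := by
  rw [abs_apply_sub_apply_le_iff, ← ha.adj_iff, or_iff_right (ha.ne j)]

theorem exists_apply_eq_of_isTailAt (hk : 1 ≤ k) (hn : 2 * k ≤ n) (f : G ↪g pathPower k m)
    (s : pathPower k (n + 1) ↪g G) {a c : V} (ha : IsTailAt G s 0 a)
    (hc : IsTailAt G s (Fin.last n) c) {z : Fin m} (hzm : m ≤ z + n + k + 1) (hz : z ≤ n + k) :
    ∃ i, f (s i) = z := by
  obtain ⟨i, -, hi⟩ := (isPathPowerPlacement_of_embedding (f.comp s)).exists_eq_of_tails hk hn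
    (a := (f a : ℕ)) (c := (f c : ℕ)) (z := (z : ℕ)) (N := m)
    (fun i hi ↦ by simp [ha.abs_sub_apply_le_iff, Fin.ext_iff,
      Nat.mod_eq_of_lt (Nat.lt_add_one_of_le hi)])
    (fun i hi ↦ by simp [hc.abs_sub_apply_le_iff, Fin.ext_iff,
      Nat.mod_eq_of_lt (Nat.lt_add_one_of_le hi)])
    (by simp) (by simp) (by omega) (by omega)
  exact ⟨Fin.ofNat (n + 1) i, Fin.ext (by exact_mod_cast hi)⟩

/-- An embedding into `G` that misses the vertex `x`, as an embedding into `G - x`. -/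
def deleteVertLift {W : Type*} {H : SimpleGraph W} (s : H ↪g G) {x : V} (hs : ∀ i, s i ≠ x) :
    H ↪g deleteVert G x where
  toFun i := ⟨s i, hs i⟩
  inj' _ _ h := s.injective (congrArg Subtype.val h)
  map_rel_iff' := s.map_adj_iff

theorem IsTailAt.deleteVertLift {W : Type*} {H : SimpleGraph W} {s : H ↪g G} {i : W} {a x : V}
    (ha : IsTailAt G s i a) (hs : ∀ i, s i ≠ x) (hax : a ≠ x) :
    IsTailAt (deleteVert G x) (deleteVertLift s hs) i ⟨a, hax⟩ where
  ne j h := ha.ne j (congrArg Subtype.val h)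
  adj_iff := ha.adj_iff

end Embeddings

section CaseA

variable {k n : ℕ}

theorem SPlusGraph_adj_v_v {A : Set (SPVert n)} {i j : Fin n} :
    (SPlusGraph k n A).Adj (.v i) (.v j) ↔ (pathPower k n).Adj i j := by
  simp [SPlusGraph, pathPower]

theorem SPlusGraph_caseA_adj_wp_v {j : Fin n} :
    (SPlusGraph k n (caseA k n)).Adj .wp (.v j) ↔ (j : ℕ) < k := by
  simp [SPlusGraph, caseA]

theorem SPlusGraph_caseA_adj_w1 {y : SPVert n} :
    (SPlusGraph k n (caseA k n)).Adj .w1 y ↔ y = .w2 ∨ y = .wp := by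
  cases y <;> simp [SPlusGraph, caseA]

theorem SPlusGraph_caseA_adj_w3 {y : SPVert n} :
    (SPlusGraph k n (caseA k n)).Adj .w3 y ↔
      y = .w4 ∨ ∃ i : Fin n, y = .v i ∧ (i : ℕ) = n - 1 := by
  cases y <;> simp [SPlusGraph, caseA]

/-- The induced `k`-path power `w⁺, v₁, …, vₙ` on `n + 1` vertices in `S⁺ₖ` with the case-a
neighbourhood. -/
def caseASpine (k n : ℕ) : pathPower k (n + 1) ↪g SPlusGraph k n (caseA k n) where
  toFun := Fin.cases .wp .v
  inj' i j h := by
    cases i using Fin.cases <;> cases j using Fin.cases <;> simp_all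
  map_rel_iff' {i j} := by
    cases i using Fin.cases <;> cases j using Fin.cases
    · simp
    · exact SPlusGraph_caseA_adj_wp_v.trans pathPower_adj_zero_succ.symm
    · rw [SimpleGraph.adj_comm, SimpleGraph.adj_comm (pathPower k (n + 1))]
      exact SPlusGraph_caseA_adj_wp_v.trans pathPower_adj_zero_succ.symm
    · exact SPlusGraph_adj_v_v.trans pathPower_adj_succ_succ.symm

@[simp]
theorem caseASpine_zero : caseASpine k n 0 = .wp := rfl

@[simp]
theorem caseASpine_succ (i : Fin n) : caseASpine k n i.succ = .v i := rfl

theorem caseASpine_ne_w4 (i : Fin (n + 1)) : caseASpine k n i ≠ .w4 := by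
  cases i using Fin.cases <;> simp

theorem isTailAt_caseASpine_w1 :
    IsTailAt (SPlusGraph k n (caseA k n)) (caseASpine k n) 0 .w1 where
  ne j := by cases j using Fin.cases <;> simp
  adj_iff j := by cases j using Fin.cases <;> simp [SPlusGraph_caseA_adj_w1]

theorem isTailAt_caseASpine_w3 (hn : n ≠ 0) :
    IsTailAt (SPlusGraph k n (caseA k n)) (caseASpine k n) (Fin.last n) .w3 where
  ne j := by cases j using Fin.cases <;> simp
  adj_iff j := by
    cases j using Fin.cases with
    | zero => simp [SPlusGraph_caseA_adj_w3, Fin.ext_iff, hn.symm]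
    | succ i =>
      rw [SPlusGraph_caseA_adj_w3, caseASpine_succ, Fin.ext_iff, Fin.val_succ, Fin.val_last]
      simp only [reduceCtorEq, false_or, SPVert.v.injEq, exists_eq_left']
      omega

theorem SPlusA_minus_w4_not_embeddable_general {m : ℕ} (hk : 1 ≤ k) (hn : 2 * k ≤ n) (z : Fin m)
    (hzm : m ≤ z + n + k + 1) (hz : z ≤ n + k) :
    IsEmpty (deleteVert (SPlusGraph k n (caseA k n)) .w4 ↪g deleteVert (pathPower k m) z) := by
  refine ⟨fun f ↦ ?_⟩
  have tail_w1 := (isTailAt_caseASpine_w1 (k := k) (n := n)).deleteVertLift caseASpine_ne_w4 nofun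
  have tail_w3 := (isTailAt_caseASpine_w3 (k := k) (n := n) (by omega)).deleteVertLift
    caseASpine_ne_w4 nofun
  obtain ⟨i, hi⟩ := exists_apply_eq_of_isTailAt hk hn
    ((SimpleGraph.Embedding.induce _).comp f) _ tail_w1 tail_w3 hzm hz
  exact (f _).2 hi

end CaseA

/-- For `k ≥ 3` (with `n = (k-1)(k+1)+2` and `g = (k-1)(k+1)`), the graph
`S^+_k - w_4`, where `S^+_k` is obtained with the case-a neighbourhood of `w^+`,
is NOT isomorphic to any induced subgraph of `J_k - z_g`
(`zg` has 0-based index `g - 1`). -/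
theorem SPlusA_minus_w4_not_embeddable (k : ℕ) (hk : 3 ≤ k)
    (zg : Fin ((2 * k - 1) * (k + 1) + 1)) (hzg : (zg : ℕ) = (k - 1) * (k + 1) - 1) :
    IsEmpty (deleteVert (SPlusGraph k ((k - 1) * (k + 1) + 2)
        (caseA k ((k - 1) * (k + 1) + 2))) SPVert.w4 ↪g deleteVert (Jgraph k) zg) := by
  obtain ⟨r, rfl⟩ := Nat.exists_eq_add_of_le' hk
  rw [Nat.add_one_sub_one] at hzg ⊢
  exact SPlusA_minus_w4_not_embeddable_general (by omega) (by grind) zg (by grind) (by grind)
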